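/- arXiv:2512.22413 — 2 statements merged into one kernel-verified Lean document; each statement's English description precedes it below -/
import Mathlib

section
/- For every natural number n with 148 ≤ n ≤ 1571 and every k with 1 ≤ k ≤ n, the number of primes p with (k−1)·n < p ≤ k·n is at least ⌊n/148⌋, i.e. π(k·n) − π((k−1)·n) ≥ ⌊n/148⌋. -/
/-!
If every window `(a, a + g]` below `N` contains a prime, then an interval of length `m` below `N`
contains `m / g` disjoint windows, hence at least `m / g` primes. It remains to see that consecutive
primes below `1571 ^ 2` are never more than `148` apart.

A number `1 < c < (B + 1) ^ 2` coprime to `B !` is prime, so one gcd tests primality. Starting from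
`x`, jump repeatedly from the current number to the largest prime at most `148` above it: if the
chain reaches `N`, then the jump crossing a given `a ∈ [x, N)` starts at most at `a` and thus lands
on a prime in `(a, a + 148]`. The kernel computes such chains.
-/

open scoped Nat

theorem exists_le_lt_apply_of_lt_iterate {α : Type*} [LinearOrder α] {f : α → α} {x a : α} {n : ℕ}
    (hx : x ≤ a) (ha : a < f^[n] x) : ∃ y ≤ a, a < f y := by
  induction n generalizing x with
  | zero => exact absurd ha hx.not_gt
  | succ n ih =>
    rcases le_or_gt (f x) a with hfx | hfx
    · exact ih hfx ha
    · exact ⟨x, hx, hfx⟩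

theorem prime_of_coprime_factorial {B c : ℕ} (hc : 1 < c) (hcB : c < (B + 1) ^ 2)
    (hcop : (B !).Coprime c) : c.Prime := by
  by_contra hnp
  have hB : B < c.minFac := (Nat.coprime_factorial_iff hc.ne').1 hcop.symm
  have hsq : c.minFac ^ 2 ≤ c := Nat.minFac_sq_le_self (by omega) hnp
  exact (hcB.trans_le (Nat.pow_le_pow_left hB 2)).not_ge hsq

/-- The largest number at most `a + g` coprime to `P`: one greedy jump, of length at most `g`, in a
chain of numbers coprime to `P`. It does not exceed `a` when `(a, a + g]` has no such number. -/
def coprimeJump (P g a : ℕ) : ℕ :=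
  Nat.findGreatest P.Coprime (a + g)

theorem coprimeJump_le (P g a : ℕ) : coprimeJump P g a ≤ a + g :=
  Nat.findGreatest_le _

theorem coprime_coprimeJump {P g a : ℕ} (h : coprimeJump P g a ≠ 0) :
    P.Coprime (coprimeJump P g a) :=
  Nat.findGreatest_of_ne_zero rfl h

theorem exists_prime_mem_Ioc_of_lt_iterate_coprimeJump {B g x a n : ℕ} (hx : 0 < x) (hxa : x ≤ a)
    (ha : a < (coprimeJump B ! g)^[n] x) (haB : a + g < (B + 1) ^ 2) :
    ∃ p ∈ Set.Ioc a (a + g), p.Prime := by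
  obtain ⟨y, hya, hay⟩ := exists_le_lt_apply_of_lt_iterate hxa ha
  have hle : coprimeJump B ! g y ≤ a + g := (coprimeJump_le _ _ _).trans (by omega)
  exact ⟨_, ⟨hay, hle⟩, prime_of_coprime_factorial (by omega) (hle.trans_lt haB)
    (coprime_coprimeJump (by omega))⟩

/- Primes up to `1571` divide `1571 !`, so the beginning of the range needs a smaller factorial. -/
theorem le_iterate_coprimeJump_factorial_41 : 1600 ≤ (coprimeJump 41 ! 148)^[20] 1 := by
  decide +kernel

/- Unevaluated jumps nest as deep as the chain is long; short segments bound that depth. -/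
theorem le_iterate_coprimeJump_factorial_1571 : ∀ i < 247,
    1600 + 10000 * (i + 1) ≤ (coprimeJump 1571 ! 148)^[80] (1600 + 10000 * i) := by
  decide +kernel

theorem exists_prime_mem_Ioc_add_148 {a : ℕ} (ha : a + 148 ≤ 1571 ^ 2) :
    ∃ p ∈ Set.Ioc a (a + 148), p.Prime := by
  rcases Nat.eq_zero_or_pos a with rfl | hpos
  · exact ⟨2, by simp, Nat.prime_two⟩
  rcases lt_or_ge a 1600 with hsmall | hlarge
  · exact exists_prime_mem_Ioc_of_lt_iterate_coprimeJump one_pos hpos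
      (hsmall.trans_le le_iterate_coprimeJump_factorial_41) (by omega)
  · have hseg := le_iterate_coprimeJump_factorial_1571 ((a - 1600) / 10000) (by omega)
    exact exists_prime_mem_Ioc_of_lt_iterate_coprimeJump (by omega) (by omega)
      (lt_of_lt_of_le (by omega) hseg) (by omega)

theorem primeCounting_lt_primeCounting {a b : ℕ} (h : ∃ p ∈ Set.Ioc a b, p.Prime) :
    a.primeCounting < b.primeCounting := by
  obtain ⟨p, ⟨hap, hpb⟩, hp⟩ := h
  calc a.primeCounting ≤ p.primeCounting' := Nat.monotone_primeCounting' hap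
    _ < p.primeCounting := Nat.count_strict_mono hp p.lt_succ_self
    _ ≤ b.primeCounting := Nat.monotone_primeCounting hpb

theorem primeCounting_add_le_primeCounting_add_mul {g N : ℕ}
    (hgap : ∀ a, a + g ≤ N → ∃ p ∈ Set.Ioc a (a + g), p.Prime) {a k : ℕ} (h : a + g * k ≤ N) :
    a.primeCounting + k ≤ (a + g * k).primeCounting := by
  induction k with
  | zero => rfl
  | succ k ih =>
    have hsplit : a + g * (k + 1) = a + g * k + g := by rw [Nat.mul_succ, Nat.add_assoc]
    rw [hsplit] at h ⊢
    have hlast := primeCounting_lt_primeCounting (hgap _ h)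
    have hfirst := ih (by omega)
    omega

theorem rows_contain_many_primes_148_general {a m : ℕ} (h : a + m ≤ 1571 ^ 2) :
    m / 148 ≤ (a + m).primeCounting - a.primeCounting := by
  have hdiv : a + 148 * (m / 148) ≤ a + m := Nat.add_le_add_left (Nat.mul_div_le m 148) a
  have hcount := primeCounting_add_le_primeCounting_add_mul
    (fun _ => exists_prime_mem_Ioc_add_148) (hdiv.trans h)
  have hmono := Nat.monotone_primeCounting hdiv
  omega

theorem rows_contain_many_primes_148 :
    ∀ n : ℕ, 148 ≤ n → n ≤ 1571 → ∀ k : ℕ, 1 ≤ k → k ≤ n →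
      n / 148 ≤ Nat.primeCounting (k * n) - Nat.primeCounting ((k - 1) * n) := by
  intro n _ hn k hk hkn
  have hrow : (k - 1) * n + n = k * n := by rw [← Nat.add_one_mul, Nat.sub_add_cancel hk]
  have hmax : k * n ≤ 1571 ^ 2 := (Nat.mul_le_mul (hkn.trans hn) hn).trans_eq (sq 1571).symm
  exact hrow ▸ rows_contain_many_primes_148_general (hrow.trans_le hmax)
end

section
/- For every natural number n with 52 ≤ n ≤ 147 and every k with 1 ≤ k ≤ n, the number of primes p with (k−1)·n < p ≤ k·n is at least ⌊n/52⌋, i.e. π(k·n) − π((k−1)·n) ≥ ⌊n/52⌋. -/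
/-!
Consecutive primes up to 31397 differ by at most 52, so every window `(x, x + 52]` with `x < 31397`
contains a prime, and a row of length `n` contains `n / 52` disjoint such windows. The bound 31397
is optimal: the next prime is 31469.

The gap bound is certified by walking greedily up to 31397, at each step going to the largest prime
at distance at most 52. Since all numbers involved are below `178 ^ 2`, a single gcd with `177!`
certifies primality.
-/

open scoped Nat

/-- One step of the greedy walk through the numbers satisfying `P`: the largest such number that
is at most `a + g`. Following `Nat.findGreatest`, the value is `0` if there is none. -/
def greedyStep (P : ℕ → Prop) [DecidablePred P] (g a : ℕ) : ℕ :=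
  Nat.findGreatest P (a + g)

theorem exists_of_lt_iterate_greedyStep {P : ℕ → Prop} [DecidablePred P] {g a x n : ℕ}
    (hax : a ≤ x) (hxn : x < (greedyStep P g)^[n] a) : ∃ b, P b ∧ x < b ∧ b ≤ x + g := by
  induction n generalizing a with
  | zero => exact absurd hxn hax.not_gt
  | succ n ih =>
    rw [Function.iterate_succ_apply] at hxn
    rcases le_or_gt (greedyStep P g a) x with hstep | hstep
    · exact ih hstep hxn
    · have hsat : P (greedyStep P g a) := Nat.findGreatest_of_ne_zero rfl (Nat.ne_zero_of_lt hstep)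
      have hle : greedyStep P g a ≤ a + g := Nat.findGreatest_le _
      exact ⟨_, hsat, hstep, hle.trans (Nat.add_le_add_right hax g)⟩

theorem prime_of_coprime_factorial_s4 {m p : ℕ} (hp : 1 < p) (hlt : p < (m + 1) ^ 2)
    (hcop : p.Coprime m !) : p.Prime := by
  by_contra hnot
  have hfac : m < p.minFac := (Nat.coprime_factorial_iff hp.ne').1 hcop
  have hsq : p.minFac ^ 2 ≤ p := Nat.minFac_sq_le_self (by lia) hnot
  exact hlt.not_ge ((Nat.pow_le_pow_left hfac 2).trans hsq)

-- Restarting the walk every 590 keeps the nested evaluation shallow; `31397 = 590 * 53 + 127`.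
theorem le_iterate_greedyStep_coprime_factorial :
    ∀ i < 53, 590 * (i + 1) + 127 ≤
      (greedyStep (fun b ↦ b.Coprime 177 !) 52)^[20] (590 * i + 127) := by
  decide +kernel

theorem exists_prime_lt_and_le_add_52 {x : ℕ} (hx : x < 31397) :
    ∃ p, p.Prime ∧ x < p ∧ p ≤ x + 52 := by
  -- Primes up to 177 are not coprime to `177!`, so the walk cannot pass through them.
  rcases lt_or_ge x 47 with h47 | h47
  · exact ⟨47, by norm_num, by lia, by lia⟩
  rcases lt_or_ge x 97 with h97 | h97
  · exact ⟨97, by norm_num, by lia, by lia⟩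
  rcases lt_or_ge x 127 with h127 | h127
  · exact ⟨127, by norm_num, by lia, by lia⟩
  let i := (x - 127) / 590
  have hwalk := le_iterate_greedyStep_coprime_factorial i (by lia)
  obtain ⟨p, hcop, hxp, hpx⟩ := exists_of_lt_iterate_greedyStep
    (show 590 * i + 127 ≤ x by lia) (lt_of_lt_of_le (by lia) hwalk)
  exact ⟨p, prime_of_coprime_factorial_s4 (by lia) (by lia) hcop, hxp, hpx⟩

section Counting

theorem primeCounting_lt_primeCounting_s4 {x y p : ℕ} (hp : p.Prime) (hxp : x < p) (hpy : p ≤ y) :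
    Nat.primeCounting x < Nat.primeCounting y :=
  (Nat.monotone_primeCounting' hxp).trans_lt (Nat.count_strict_mono hp (Nat.lt_succ_of_le hpy))

variable {g N : ℕ} (hwindow : ∀ x < N, ∃ p, p.Prime ∧ x < p ∧ p ≤ x + g)

include hwindow

theorem primeCounting_add_le_primeCounting_add_mul_s4 {x m : ℕ} (hm : x + g * m < N + g) :
    Nat.primeCounting x + m ≤ Nat.primeCounting (x + g * m) := by
  induction m with
  | zero => simp
  | succ m ih =>
    have hnext : x + g * (m + 1) = x + g * m + g := by ring
    rw [hnext] at hm ⊢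
    obtain ⟨p, hp, hxp, hpx⟩ := hwindow (x + g * m) (by lia)
    calc Nat.primeCounting x + (m + 1)
        ≤ Nat.primeCounting (x + g * m) + 1 := Nat.succ_le_succ (ih (by lia))
      _ ≤ Nat.primeCounting (x + g * m + g) := primeCounting_lt_primeCounting_s4 hp hxp hpx

theorem primeCounting_add_div_le_primeCounting_add {x n : ℕ} (hn : x + n < N + g) :
    Nat.primeCounting x + n / g ≤ Nat.primeCounting (x + n) := by
  have hle : x + g * (n / g) ≤ x + n := Nat.add_le_add_left (Nat.mul_div_le n g) x
  exact (primeCounting_add_le_primeCounting_add_mul_s4 hwindow (hle.trans_lt hn)).trans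
    (Nat.monotone_primeCounting hle)

end Counting

theorem rows_contain_many_primes_52_general {n k : ℕ} (hk : 1 ≤ k) (hkn : k * n < 31397 + 52) :
    n / 52 ≤ Nat.primeCounting (k * n) - Nat.primeCounting ((k - 1) * n) := by
  obtain ⟨j, rfl⟩ := Nat.exists_eq_add_of_le' hk
  rw [Nat.add_sub_cancel, Nat.add_one_mul]
  rw [Nat.add_one_mul] at hkn
  exact Nat.le_sub_of_add_le' <|
    primeCounting_add_div_le_primeCounting_add (fun _ ↦ exists_prime_lt_and_le_add_52) hkn

theorem rows_contain_many_primes_52 :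
    ∀ n : ℕ, 52 ≤ n → n ≤ 147 → ∀ k : ℕ, 1 ≤ k → k ≤ n →
      n / 52 ≤ Nat.primeCounting (k * n) - Nat.primeCounting ((k - 1) * n) :=
  fun _ _ hn _ hk hkn ↦ rows_contain_many_primes_52_general hk <|
    (Nat.mul_le_mul (hkn.trans hn) hn).trans_lt (by norm_num)
end
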